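/- arXiv:0806.3874 — 2 statements merged into one kernel-verified Lean document; each statement's English description precedes it below -/
import Mathlib

section
/- Let L* be a generic element of K_{t,⪰}, let 1 ≤ s ≤ ⌊t/2⌋, and let G_t = H_t ∪ W_t. If rank M_s(L*) = rank M_{s−1}(L*), then dim π_{2s}(G_t^⊥) = dim π_{s−1}(G_t^⊥); if moreover s ≥ D, where D = max_j deg(h_j), then also dim π_{2s}(G_t^⊥) = dim π_{2s}((G_t^+)^⊥). -/
open MvPolynomial

noncomputable section

/-- The polynomial ring `ℝ[x₁,…,xₙ]`. -/
abbrev MP (n : ℕ) := MvPolynomial (Fin n) ℝ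

/-- The total degree `|α|` of a monomial exponent `α`. -/
def mdeg {n : ℕ} (α : Fin n →₀ ℕ) : ℕ := α.sum fun _ e => e

/-- The subspace `ℝ[x]_t` of polynomials of total degree at most `t`. -/
abbrev RxT (n t : ℕ) : Submodule ℝ (MP n) := restrictTotalDegree (Fin n) ℝ t

/-- The kernel of the moment matrix `M_s(L)`: polynomials `p` of degree at most `s` such that
`L(p·x^β) = 0` for all monomials `x^β` of degree at most `s`. -/
def momKer {n : ℕ} (L : Module.Dual ℝ (MP n)) (s : ℕ) : Set (MP n) :=
  {p | p.totalDegree ≤ s ∧ ∀ β : Fin n →₀ ℕ, mdeg β ≤ s → L (p * monomial β 1) = 0}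

/-- Positive semidefiniteness of the moment matrix `M_t(L)`: `L(p²) ≥ 0` for all `p ∈ ℝ[x]_t`. -/
def momPSD {n : ℕ} (L : Module.Dual ℝ (MP n)) (t : ℕ) : Prop :=
  ∀ p : MP n, p.totalDegree ≤ t → 0 ≤ L (p * p)

/-- The bilinear/moment form of order `s` associated to `L`, as a map `ℝ[x]_s → (ℝ[x]_s)*`;
its matrix in the monomial basis is the moment matrix `M_s(L)`. -/
def momBil {n : ℕ} (L : Module.Dual ℝ (MP n)) (s : ℕ) :
    RxT n s →ₗ[ℝ] Module.Dual ℝ (RxT n s) :=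
  LinearMap.mk₂ ℝ (fun p q => L ((p : MP n) * (q : MP n)))
    (fun p p' q => by simp [add_mul])
    (fun c p q => by simp [smul_mul_assoc])
    (fun p q q' => by simp [mul_add])
    (fun c p q => by simp [mul_smul_comm])

/-- The rank of the moment matrix `M_s(L)`. -/
def momRank {n : ℕ} (L : Module.Dual ℝ (MP n)) (s : ℕ) : ℕ :=
  Module.finrank ℝ (LinearMap.range (momBil L s))

/-- The column of the moment matrix `M_s(L)` indexed by the monomial `β`. -/
def momCol {n : ℕ} (L : Module.Dual ℝ (MP n)) (s : ℕ) (β : Fin n →₀ ℕ) :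
    {α : Fin n →₀ ℕ // mdeg α ≤ s} → ℝ :=
  fun α => L (monomial (α.1 + β) 1)

/-- `G^⊥`: linear functionals vanishing on the set `G`. -/
def annih {n : ℕ} (G : Set (MP n)) : Submodule ℝ (Module.Dual ℝ (MP n)) :=
  (Submodule.span ℝ G).dualAnnihilator

/-- The projection `π_s` sending a linear functional to its restriction to `ℝ[x]_s`. -/
def projDual (n s : ℕ) : Module.Dual ℝ (MP n) →ₗ[ℝ] Module.Dual ℝ (RxT n s) :=
  (RxT n s).subtype.dualMap

/-- `dim π_s(G^⊥)`. -/
def dimProj {n : ℕ} (s : ℕ) (G : Set (MP n)) : ℕ :=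
  Module.finrank ℝ (Submodule.map (projDual n s) (annih G))

/-- The one-degree prolongation `S⁺ = S ∪ x₁S ∪ … ∪ xₙS` of a set of polynomials. -/
def plusOp {n : ℕ} (G : Set (MP n)) : Set (MP n) :=
  G ∪ ⋃ i : Fin n, (fun p => X i * p) '' G

/-- The set `H_t = {x^α h_j : |α| + deg h_j ≤ t}` of prolongations of the generators. -/
def Hset {n m : ℕ} (h : Fin m → MP n) (t : ℕ) : Set (MP n) :=
  {p | ∃ (α : Fin n →₀ ℕ) (j : Fin m), mdeg α + (h j).totalDegree ≤ t ∧ p = monomial α 1 * h j}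

/-- The cone `K_{t,⪰}` of linear functionals vanishing on `H_t` with `M_{⌊t/2⌋}(L) ⪰ 0`. -/
def Kpos {n m : ℕ} (h : Fin m → MP n) (t : ℕ) : Set (Module.Dual ℝ (MP n)) :=
  {L | (∀ g ∈ Hset h t, L g = 0) ∧ momPSD L (t / 2)}

/-- `L*` is generic in `K_{t,⪰}`: it belongs to `K_{t,⪰}` and its moment matrix
`M_{⌊t/2⌋}(L*)` has maximum rank over `K_{t,⪰}`. -/
def Generic {n m : ℕ} (h : Fin m → MP n) (t : ℕ) (Ls : Module.Dual ℝ (MP n)) : Prop :=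
  Ls ∈ Kpos h t ∧ ∀ L ∈ Kpos h t, momRank L (t / 2) ≤ momRank Ls (t / 2)

/-- `W_t = {x^α g : |α| ≤ ⌊t/2⌋, g ∈ N_t}`, with `N_t = Ker M_{⌊t/2⌋}(L*)` for `L*` generic. -/
def Wset {n m : ℕ} (h : Fin m → MP n) (t : ℕ) (Ls : Module.Dual ℝ (MP n)) : Set (MP n) :=
  {p | ∃ (α : Fin n →₀ ℕ) (g : MP n), mdeg α ≤ t / 2 ∧ g ∈ momKer Ls (t / 2) ∧
    p = monomial α 1 * g}

/-- The real radical `√[ℝ]I` of an ideal `I`. -/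
def realRad {n : ℕ} (I : Ideal (MP n)) : Set (MP n) :=
  {p | ∃ m : ℕ, 0 < m ∧ ∃ (k : ℕ) (q : Fin k → MP n), p ^ (2 * m) + ∑ j, q j ^ 2 ∈ I}

/-- A set of monomials closed under taking divisions. -/
def DivClosed {n : ℕ} (B : Set (Fin n →₀ ℕ)) : Prop :=
  ∀ a ∈ B, ∀ a' : Fin n →₀ ℕ, a' ≤ a → a' ∈ B

/-- A set of monomials connected to 1: each `m ∈ B` is a product `m = m₁⋯m_k` with `m₁ = 1`
and all partial products `m₁⋯m_h ∈ B` (written additively on exponents). -/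
def ConnectedToOne {n : ℕ} (B : Set (Fin n →₀ ℕ)) : Prop :=
  ∀ a ∈ B, ∃ (k : ℕ) (c : Fin (k + 1) → (Fin n →₀ ℕ)),
    c 0 = 0 ∧ (∀ j : Fin (k + 1), (∑ i ∈ Finset.univ.filter (· ≤ j), c i) ∈ B) ∧
    (∑ i, c i) = a

/-- `Span_ℝ(B)` for a set `B` of monomials. -/
def spanMon {n : ℕ} (B : Set (Fin n →₀ ℕ)) : Submodule ℝ (MP n) :=
  Submodule.span ℝ ((fun a => (monomial a 1 : MP n)) '' B)

/-- The border `∂B = B⁺ \ B` of a set of monomials. -/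
def borderSet {n : ℕ} (B : Set (Fin n →₀ ℕ)) : Set (Fin n →₀ ℕ) :=
  {a | a ∉ B ∧ ∃ i : Fin n, ∃ b ∈ B, a = b + Finsupp.single i 1}

end

/-!
The rank condition says that, modulo `N = Ker M_s(L)`, every polynomial of degree at most `s`
reduces to one of degree at most `s - 1`. Multiplication by a variable followed by this reduction is
self-adjoint for `(p, q) ↦ L (p q)`, so these operators commute and make
`ℝ[x]_{s-1} / (N ∩ ℝ[x]_{s-1})` a module over `ℝ[x]`; hence the ideal `J` generated by `N` contains
no polynomials of degree at most `s` besides those of `N`.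

By duality `dim π_d(G^⊥)` is the dimension of the image of `ℝ[x]_d` in `ℝ[x] / span G`. Reducing
repeatedly modulo `N` moves `ℝ[x]_{2s}` into `ℝ[x]_{s-1}` up to elements of `ℝ[x]_{t/2} N`, which
lie in `span W_t` because positivity gives `N ⊆ N_t`. When `s ≥ D`, both `G_t` and `G_t⁺` lie in
`J`, while `J ∩ ℝ[x]_{2s} ⊆ span G_t`.
-/

section TotalDegree

variable {σ R : Type*} [CommSemiring R]

lemma restrictTotalDegree_mono {a b : ℕ} (hab : a ≤ b) :
    restrictTotalDegree σ R a ≤ restrictTotalDegree σ R b :=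
  restrictSupport_mono R fun _ hα => le_trans hα hab

lemma one_mem_restrictTotalDegree (d : ℕ) : (1 : MvPolynomial σ R) ∈ restrictTotalDegree σ R d := by
  simp [mem_restrictTotalDegree]

lemma monomial_mem_restrictTotalDegree {α : σ →₀ ℕ} {d : ℕ} (hα : α.degree ≤ d) (c : R) :
    monomial α c ∈ restrictTotalDegree σ R d :=
  (monomial_mem_restrictSupport R).2 (Or.inl hα)

lemma restrictTotalDegree_eq_span (d : ℕ) :
    restrictTotalDegree σ R d =
      Submodule.span R ((fun α : σ →₀ ℕ => monomial α (1 : R)) '' {α | α.degree ≤ d}) :=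
  restrictSupport_eq_span R _

open scoped Pointwise in
lemma restrictTotalDegree_add (a b : ℕ) :
    restrictTotalDegree σ R (a + b) = restrictTotalDegree σ R a * restrictTotalDegree σ R b := by
  have hIic : Set.Iic (a + b) = Set.Iic a + Set.Iic b := by
    ext d
    simp only [Set.mem_add, Set.mem_Iic]
    constructor
    · exact fun hd => ⟨min d a, by omega, d - min d a, by omega, by omega⟩
    · rintro ⟨x, hx, y, hy, rfl⟩
      omega
  have hdeg := Finsupp.degree_preimage_add (σ := σ) (Set.Iic a) (Set.Iic b)
  rw [← hIic] at hdeg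
  exact (congrArg (restrictSupport R) hdeg).trans (restrictSupport_add R _ _)

lemma X_mul_mem_restrictTotalDegree (i : σ) {d : ℕ} {p : MvPolynomial σ R}
    (hp : p ∈ restrictTotalDegree σ R d) : X i * p ∈ restrictTotalDegree σ R (d + 1) := by
  rw [add_comm, restrictTotalDegree_add]
  exact Submodule.mul_mem_mul (monomial_mem_restrictTotalDegree (by simp) 1) hp

lemma restrictTotalDegree_succ_le {d : ℕ} {S : Submodule R (MvPolynomial σ R)} (h1 : 1 ∈ S)
    (hX : ∀ i, ∀ p ∈ restrictTotalDegree σ R d, X i * p ∈ S) :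
    restrictTotalDegree σ R (d + 1) ≤ S := by
  rw [restrictTotalDegree_eq_span, Submodule.span_le]
  rintro _ ⟨α, hα, rfl⟩
  obtain rfl | hα0 := eq_or_ne α 0
  · exact h1
  obtain ⟨i, hi⟩ := Finsupp.ne_iff.1 hα0
  obtain ⟨γ, rfl⟩ := le_iff_exists_add.1
    (Finsupp.single_le_iff.2 (Nat.one_le_iff_ne_zero.2 hi) : Finsupp.single i 1 ≤ α)
  have hγ : γ.degree ≤ d := by
    have hdeg : (Finsupp.single i 1 + γ).degree ≤ d + 1 := hα
    rw [map_add, Finsupp.degree_single] at hdeg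
    omega
  simpa [X, monomial_mul] using hX i _ (monomial_mem_restrictTotalDegree hγ 1)

lemma restrictTotalDegree_add_le_sup_mul {s : ℕ} {N : Submodule R (MvPolynomial σ R)}
    (hN : restrictTotalDegree σ R (s + 1) ≤ restrictTotalDegree σ R s ⊔ N) (k : ℕ) :
    restrictTotalDegree σ R (s + 1 + k) ≤
      restrictTotalDegree σ R s ⊔ restrictTotalDegree σ R k * N := by
  have N_le (d : ℕ) : N ≤ restrictTotalDegree σ R d * N := fun g hg => by
    simpa using Submodule.mul_mem_mul (one_mem_restrictTotalDegree d) hg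
  induction k with
  | zero => exact hN.trans (sup_le_sup_left (N_le 0) _)
  | succ k ih =>
    calc restrictTotalDegree σ R (s + 1 + (k + 1))
        = restrictTotalDegree σ R 1 * restrictTotalDegree σ R (s + 1 + k) := by
          rw [← restrictTotalDegree_add]; congr 1; omega
      _ ≤ restrictTotalDegree σ R 1 *
            (restrictTotalDegree σ R s ⊔ restrictTotalDegree σ R k * N) := by gcongr
      _ = restrictTotalDegree σ R (s + 1) ⊔ restrictTotalDegree σ R (k + 1) * N := by
          rw [Submodule.mul_sup, ← mul_assoc, ← restrictTotalDegree_add, ← restrictTotalDegree_add,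
            add_comm 1 s, add_comm 1 k]
      _ ≤ restrictTotalDegree σ R s ⊔ restrictTotalDegree σ R (k + 1) * N :=
          sup_le (hN.trans (sup_le_sup_left (N_le _) _)) le_sup_right

end TotalDegree

section CommutingOperators

open scoped IsMulCommutative in
lemma exists_algHom_X_eq_of_commute {σ R A : Type*} [CommSemiring R] [Semiring A] [Algebra R A]
    {T : σ → A} (hT : ∀ i j, Commute (T i) (T j)) :
    ∃ φ : MvPolynomial σ R →ₐ[R] A, ∀ i, φ (X i) = T i := by
  have := Algebra.isMulCommutative_adjoin R (s := Set.range T)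
    (by rintro _ ⟨i, rfl⟩ _ ⟨j, rfl⟩; exact hT i j)
  let T' (i : σ) : Algebra.adjoin R (Set.range T) := ⟨T i, Algebra.subset_adjoin ⟨i, rfl⟩⟩
  exact ⟨(Algebra.adjoin R (Set.range T)).val.comp (aeval T'), fun i => by simp [T']⟩

variable {σ R V : Type*} [CommSemiring R] [AddCommMonoid V] [Module R V] {s : ℕ}
  {e : MvPolynomial σ R →ₗ[R] V} {T : σ → Module.End R V}

lemma algHom_apply_map_one_eq
    (he : ∀ i, ∀ q ∈ restrictTotalDegree σ R s, e (X i * q) = T i (e q))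
    {φ : MvPolynomial σ R →ₐ[R] Module.End R V} (hφ : ∀ i, φ (X i) = T i)
    {p : MvPolynomial σ R} (hp : p ∈ restrictTotalDegree σ R (s + 1)) : φ p (e 1) = e p := by
  suffices h : ∀ d ≤ s + 1,
      restrictTotalDegree σ R d ≤
        LinearMap.eqLocus (LinearMap.applyₗ (e 1) ∘ₗ φ.toLinearMap) e from
    h _ le_rfl hp
  intro d hd
  induction d with
  | zero =>
    intro p hp
    obtain ⟨c, rfl⟩ : ∃ c, p = C c :=
      ⟨_, totalDegree_eq_zero_iff_eq_C.1 (Nat.le_zero.1 ((mem_restrictTotalDegree σ 0 p).1 hp))⟩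
    simp [C_eq_smul_one]
  | succ d ih =>
    refine restrictTotalDegree_succ_le (by simp) fun i p hp => ?_
    have hφp : φ p (e 1) = e p := ih (by omega) hp
    simp [hφ, hφp, he i p (restrictTotalDegree_mono (by omega) hp)]

/- The polynomials `p` with `p(T) (e 1) = 0` form an ideal, and `p(T) (e 1) = e p` as long as
`deg p ≤ s + 1`. -/
lemma map_eq_zero_of_mem_ideal_span (hT : ∀ i j, Commute (T i) (T j))
    (he : ∀ i, ∀ q ∈ restrictTotalDegree σ R s, e (X i * q) = T i (e q))
    {N : Set (MvPolynomial σ R)} (hNdeg : N ⊆ restrictTotalDegree σ R (s + 1))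
    (hN : ∀ g ∈ N, e g = 0) {p : MvPolynomial σ R} (hpN : p ∈ Ideal.span N)
    (hp : p ∈ restrictTotalDegree σ R (s + 1)) : e p = 0 := by
  obtain ⟨φ, hφ⟩ := exists_algHom_X_eq_of_commute (R := R) hT
  have hφN (q : MvPolynomial σ R) (hq : q ∈ Ideal.span N) : φ q (e 1) = 0 := by
    induction hq using Submodule.span_induction with
    | mem g hg => rw [algHom_apply_map_one_eq he hφ (hNdeg hg), hN g hg]
    | zero => simp
    | add a b _ _ ha hb => simp [ha, hb]
    | smul a b _ hb => simp [hb]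
  exact (algHom_apply_map_one_eq he hφ hp).symm.trans (hφN p hpN)

end CommutingOperators

lemma exists_linearMap_sub_mem {K V : Type*} [DivisionRing K] [AddCommGroup V] [Module K V]
    (B N : Submodule K V) :
    ∃ ρ : V →ₗ[K] V, (∀ v, ρ v ∈ B) ∧ (∀ v ∈ N, ρ v = 0) ∧ ∀ v ∈ B ⊔ N, v - ρ v ∈ N := by
  let f := N.mkQ ∘ₗ B.subtype
  obtain ⟨g, hg⟩ := f.rangeRestrict.exists_rightInverse_of_surjective f.range_rangeRestrict
  obtain ⟨g', hg'⟩ := g.exists_extend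
  refine ⟨B.subtype ∘ₗ g' ∘ₗ N.mkQ, fun v => (g' (N.mkQ v)).2, fun v hv => ?_, fun v hv => ?_⟩
  · simp [(Submodule.Quotient.mk_eq_zero N).2 hv]
  · obtain ⟨b, hb, u, hu, rfl⟩ := Submodule.mem_sup.1 hv
    have hfg : N.mkQ (g' (f ⟨b, hb⟩)) = f ⟨b, hb⟩ := by
      have hg'b : g' (f ⟨b, hb⟩) = g (f.rangeRestrict ⟨b, hb⟩) :=
        LinearMap.congr_fun hg' (f.rangeRestrict ⟨b, hb⟩)
      rw [hg'b]
      exact congrArg Subtype.val (LinearMap.congr_fun hg (f.rangeRestrict ⟨b, hb⟩))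
    have hbu : N.mkQ (b + u) = f ⟨b, hb⟩ := by
      simpa [f] using hu
    refine (Submodule.Quotient.eq N).1 ?_
    change N.mkQ (b + u) = N.mkQ (g' (N.mkQ (b + u)))
    rw [hbu, hfg]

section DimProj

variable {n : ℕ}

lemma dimProj_eq_finrank_range (d : ℕ) (G : Set (MP n)) :
    dimProj d G =
      Module.finrank ℝ (LinearMap.range ((Submodule.span ℝ G).mkQ ∘ₗ (RxT n d).subtype)) := by
  rw [← LinearMap.finrank_range_dualMap_eq_finrank_range, ← LinearMap.dualMap_comp_dualMap,
    LinearMap.range_comp, Submodule.range_dualMap_mkQ_eq]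
  rfl

lemma dimProj_eq_of_le_sup_span {a b : ℕ} {G : Set (MP n)} (hab : a ≤ b)
    (hG : RxT n b ≤ RxT n a ⊔ Submodule.span ℝ G) : dimProj b G = dimProj a G := by
  have hmap : (RxT n b).map (Submodule.span ℝ G).mkQ = (RxT n a).map (Submodule.span ℝ G).mkQ := by
    refine le_antisymm ?_ (Submodule.map_mono (restrictTotalDegree_mono hab))
    simpa [Submodule.map_sup] using Submodule.map_mono (f := (Submodule.span ℝ G).mkQ) hG
  have hrange (d : ℕ) : LinearMap.range ((Submodule.span ℝ G).mkQ ∘ₗ (RxT n d).subtype) =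
      (RxT n d).map (Submodule.span ℝ G).mkQ := by
    rw [LinearMap.range_comp, Submodule.range_subtype]
  rw [dimProj_eq_finrank_range, dimProj_eq_finrank_range, hrange, hrange, hmap]

lemma dimProj_eq_of_inf_span_le {d : ℕ} {G G' : Set (MP n)} (hGG' : G ⊆ G')
    (hG' : RxT n d ⊓ Submodule.span ℝ G' ≤ Submodule.span ℝ G) : dimProj d G = dimProj d G' := by
  have hker : LinearMap.ker ((Submodule.span ℝ G).mkQ ∘ₗ (RxT n d).subtype) =
      LinearMap.ker ((Submodule.span ℝ G').mkQ ∘ₗ (RxT n d).subtype) := by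
    ext p
    simpa using ⟨fun hp => Submodule.span_mono hGG' hp, fun hp => hG' ⟨p.2, hp⟩⟩
  have hG_rank := LinearMap.finrank_range_add_finrank_ker
    ((Submodule.span ℝ G).mkQ ∘ₗ (RxT n d).subtype)
  have hG'_rank := LinearMap.finrank_range_add_finrank_ker
    ((Submodule.span ℝ G').mkQ ∘ₗ (RxT n d).subtype)
  rw [hker] at hG_rank
  rw [dimProj_eq_finrank_range, dimProj_eq_finrank_range]
  omega

lemma span_plusOp_le {G : Set (MP n)} {J : Ideal (MP n)} (hG : G ⊆ J) :
    Submodule.span ℝ (plusOp G) ≤ J.restrictScalars ℝ := by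
  refine Submodule.span_le.2 (Set.union_subset hG (Set.iUnion_subset fun i => ?_))
  rintro _ ⟨g, hg, rfl⟩
  exact J.mul_mem_left _ (hG hg)

end DimProj

section MomentKernel

variable {n : ℕ} {L : Module.Dual ℝ (MP n)} {s k : ℕ}

lemma mem_momKer_iff {p : MP n} :
    p ∈ momKer L s ↔ p ∈ RxT n s ∧ ∀ q ∈ RxT n s, L (p * q) = 0 := by
  refine and_congr (mem_restrictTotalDegree _ _ _).symm ⟨fun hp q hq => ?_, fun hp β hβ =>
    hp _ (monomial_mem_restrictTotalDegree hβ 1)⟩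
  have hle : RxT n s ≤ LinearMap.ker (L ∘ₗ LinearMap.mulLeft ℝ p) := by
    rw [RxT, restrictTotalDegree_eq_span, Submodule.span_le]
    rintro _ ⟨β, hβ, rfl⟩
    exact hp β hβ
  exact hle hq

variable (L s) in
/-- The kernel `Ker M_s(L)` as a linear subspace of `ℝ[x]`. -/
def momKerSubmodule : Submodule ℝ (MP n) where
  carrier := momKer L s
  zero_mem' := mem_momKer_iff.2 ⟨zero_mem _, by simp⟩
  add_mem' hp hq := by
    rw [mem_momKer_iff] at *
    exact ⟨add_mem hp.1 hq.1, fun r hr => by rw [add_mul, map_add, hp.2 r hr, hq.2 r hr, add_zero]⟩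
  smul_mem' c p hp := by
    rw [mem_momKer_iff] at *
    exact ⟨Submodule.smul_mem _ c hp.1, fun r hr => by
      rw [smul_mul_assoc, map_smul, hp.2 r hr, smul_zero]⟩

lemma momKerSubmodule_le_RxT : momKerSubmodule L s ≤ RxT n s := fun _ hp => (mem_momKer_iff.1 hp).1

/- For positive semidefinite `M_k(L)`, the kernel consists of the isotropic polynomials. -/
lemma momKerSubmodule_mono (hsk : s ≤ k) (hL : momPSD L k) :
    momKerSubmodule L s ≤ momKerSubmodule L k := by
  intro g hg
  obtain ⟨hgs, hg⟩ := mem_momKer_iff.1 hg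
  have hgk := restrictTotalDegree_mono hsk hgs
  refine mem_momKer_iff.2 ⟨hgk, fun q hq => ?_⟩
  have hCS : L (g * q) * L (q * g) ≤ L (g * g) * L (q * q) :=
    LinearMap.BilinForm.apply_mul_apply_le_of_forall_zero_le (momBil L k)
      (fun p => hL p ((mem_restrictTotalDegree _ _ _).1 p.2)) ⟨g, hgk⟩ ⟨q, hq⟩
  rw [hg g hgs, zero_mul, mul_comm q g] at hCS
  exact mul_self_eq_zero.1 (le_antisymm hCS (mul_self_nonneg _))

lemma mul_momKerSubmodule_le_ideal_span (k : ℕ) :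
    RxT n k * momKerSubmodule L s ≤ (Ideal.span (momKer L s)).restrictScalars ℝ :=
  Submodule.mul_le.2 fun p _ _ hg => Ideal.mul_mem_left _ p (Ideal.subset_span hg)

lemma mul_momKerSubmodule_le_ker (k : ℕ) :
    RxT n k * momKerSubmodule L k ≤ LinearMap.ker L :=
  Submodule.mul_le.2 fun p hp g hg => by
    rw [LinearMap.mem_ker, mul_comm]
    exact (mem_momKer_iff.1 hg).2 p hp

end MomentKernel

section Flat

variable {n : ℕ} {L : Module.Dual ℝ (MP n)} {s : ℕ}

/-- `M_{s+1}(L)` is a flat extension of `M_s(L)`: modulo the kernel of `M_{s+1}(L)`, every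
polynomial of degree at most `s + 1` is congruent to one of degree at most `s`. -/
def IsFlat (L : Module.Dual ℝ (MP n)) (s : ℕ) : Prop :=
  RxT n (s + 1) ≤ RxT n s ⊔ momKerSubmodule L (s + 1)

lemma isFlat_of_momRank_eq (hrank : momRank L (s + 1) = momRank L s) : IsFlat L s := by
  intro p hp
  let ι := Submodule.inclusion (restrictTotalDegree_mono s.le_succ : RxT n s ≤ RxT n (s + 1))
  have hrestrict : momBil L s = ι.dualMap ∘ₗ momBil L (s + 1) ∘ₗ ι := rfl
  have hfinrank : Module.finrank ℝ (LinearMap.range (momBil L (s + 1))) ≤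
      Module.finrank ℝ (LinearMap.range (momBil L (s + 1) ∘ₗ ι)) := by
    change momRank L (s + 1) ≤ _
    rw [hrank, momRank, hrestrict, LinearMap.range_comp]
    exact Submodule.finrank_map_le _ _
  have hrange := Submodule.eq_of_le_of_finrank_le
    (LinearMap.range_comp_le_range ι (momBil L (s + 1))) hfinrank
  obtain ⟨q, hq⟩ : momBil L (s + 1) ⟨p, hp⟩ ∈ LinearMap.range (momBil L (s + 1) ∘ₗ ι) :=
    hrange ▸ LinearMap.mem_range_self _ _
  have hpq : p - q ∈ momKerSubmodule L (s + 1) := by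
    refine mem_momKer_iff.2 ⟨sub_mem hp (ι q).2, fun r hr => ?_⟩
    have hqr : L (q * r) = L (p * r) := LinearMap.congr_fun hq ⟨r, hr⟩
    rw [sub_mul, map_sub, hqr, sub_self]
  exact Submodule.mem_sup.2 ⟨q, q.2, p - q, hpq, add_sub_cancel _ _⟩

namespace IsFlat

lemma mem_momKerSubmodule_of_forall_eq_zero (hflat : IsFlat L s) {p : MP n}
    (hp : p ∈ RxT n (s + 1)) (hpL : ∀ r ∈ RxT n s, L (p * r) = 0) :
    p ∈ momKerSubmodule L (s + 1) := by
  refine mem_momKer_iff.2 ⟨hp, fun q hq => ?_⟩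
  obtain ⟨r, hr, g, hg, rfl⟩ := Submodule.mem_sup.1 (hflat hq)
  rw [mul_add, map_add, hpL r hr, mul_comm p g, (mem_momKer_iff.1 hg).2 p hp, add_zero]

lemma X_mul_mem_momKerSubmodule (hflat : IsFlat L s) (i : Fin n) {g : MP n} (hgs : g ∈ RxT n s)
    (hg : g ∈ momKerSubmodule L (s + 1)) : X i * g ∈ momKerSubmodule L (s + 1) := by
  refine hflat.mem_momKerSubmodule_of_forall_eq_zero (X_mul_mem_restrictTotalDegree i hgs)
    fun r hr => ?_
  rw [mul_comm (X i) g, mul_assoc]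
  exact (mem_momKer_iff.1 hg).2 _ (X_mul_mem_restrictTotalDegree i hr)

/- Multiplication by a variable is self-adjoint for `(p, q) ↦ L (p q)`, so testing both products
against `r` gives `L (x_i x_j q r)`. -/
lemma X_mul_sub_X_mul_mem_momKerSubmodule (hflat : IsFlat L s) {i j : Fin n} {q a b : MP n}
    (ha : a ∈ RxT n s) (hb : b ∈ RxT n s) (hqa : X j * q - a ∈ momKerSubmodule L (s + 1))
    (hqb : X i * q - b ∈ momKerSubmodule L (s + 1)) :
    X i * a - X j * b ∈ momKerSubmodule L (s + 1) := by
  refine hflat.mem_momKerSubmodule_of_forall_eq_zero (sub_mem (X_mul_mem_restrictTotalDegree i ha)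
    (X_mul_mem_restrictTotalDegree j hb)) fun r hr => ?_
  have hLa := (mem_momKer_iff.1 hqa).2 _ (X_mul_mem_restrictTotalDegree i hr)
  have hLb := (mem_momKer_iff.1 hqb).2 _ (X_mul_mem_restrictTotalDegree j hr)
  have hsplit : (X i * a - X j * b) * r =
      (X i * q - b) * (X j * r) - (X j * q - a) * (X i * r) := by ring
  rw [hsplit, map_sub, hLa, hLb, sub_zero]

lemma mem_momKerSubmodule_of_mem_ideal_span (hflat : IsFlat L s) {p : MP n}
    (hpJ : p ∈ Ideal.span (momKer L (s + 1))) (hp : p ∈ RxT n (s + 1)) :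
    p ∈ momKerSubmodule L (s + 1) := by
  obtain ⟨ρ, hρs, hρN, hρ⟩ := exists_linearMap_sub_mem (RxT n s) (momKerSubmodule L (s + 1))
  replace hρ (v : MP n) (hv : v ∈ RxT n (s + 1)) : v - ρ v ∈ momKerSubmodule L (s + 1) :=
    hρ v (hflat hv)
  have hρ_congr {a b : MP n} (hab : a - b ∈ momKerSubmodule L (s + 1)) : ρ a = ρ b :=
    sub_eq_zero.1 (by rw [← map_sub, hρN _ hab])
  have hρρ {v : MP n} (hv : v ∈ RxT n (s + 1)) : ρ (ρ v) = ρ v := (hρ_congr (hρ v hv)).symm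
  let T (i : Fin n) : Module.End ℝ (MP n) := ρ ∘ₗ LinearMap.mulLeft ℝ (X i) ∘ₗ ρ
  have hT_apply (i : Fin n) (v : MP n) : T i v = ρ (X i * ρ v) := rfl
  have hT_comm (i j : Fin n) : Commute (T i) (T j) := LinearMap.ext fun v => by
    have hX (l : Fin n) : X l * ρ v ∈ RxT n (s + 1) := X_mul_mem_restrictTotalDegree l (hρs v)
    simp only [Module.End.mul_apply, hT_apply, hρρ (hX _)]
    exact hρ_congr (hflat.X_mul_sub_X_mul_mem_momKerSubmodule (hρs _) (hρs _)
      (hρ _ (hX j)) (hρ _ (hX i)))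
  have hT_ρ (i : Fin n) (q : MP n) (hq : q ∈ RxT n s) : ρ (X i * q) = T i (ρ q) := by
    have hq' : q ∈ RxT n (s + 1) := restrictTotalDegree_mono s.le_succ hq
    rw [hT_apply, hρρ hq']
    refine hρ_congr ?_
    rw [← mul_sub]
    exact hflat.X_mul_mem_momKerSubmodule i (sub_mem hq (hρs q)) (hρ q hq')
  have hρp : ρ p = 0 :=
    map_eq_zero_of_mem_ideal_span hT_comm hT_ρ momKerSubmodule_le_RxT hρN hpJ hp
  simpa [hρp] using hρ p hp

lemma inf_ideal_span_le_mul (hflat : IsFlat L s) (k : ℕ) :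
    RxT n (s + 1 + k) ⊓ (Ideal.span (momKer L (s + 1))).restrictScalars ℝ ≤
      RxT n k * momKerSubmodule L (s + 1) := by
  rintro p ⟨hp, hpJ⟩
  obtain ⟨q, hq, u, hu, rfl⟩ := Submodule.mem_sup.1 (restrictTotalDegree_add_le_sup_mul hflat k hp)
  have hqJ : q ∈ Ideal.span (momKer L (s + 1)) :=
    (Submodule.add_mem_iff_left _ (mul_momKerSubmodule_le_ideal_span k hu)).1 hpJ
  have hqN := hflat.mem_momKerSubmodule_of_mem_ideal_span hqJ
    (restrictTotalDegree_mono s.le_succ hq)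
  refine add_mem ?_ hu
  simpa using Submodule.mul_mem_mul (one_mem_restrictTotalDegree k) hqN

lemma momKer_subset_ideal_span (hflat : IsFlat L s) {k : ℕ} (hsk : s + 1 ≤ k) (hL : momPSD L k) :
    momKer L k ⊆ Ideal.span (momKer L (s + 1)) := by
  obtain ⟨l, rfl⟩ := Nat.exists_eq_add_of_le hsk
  intro g hg
  obtain ⟨hgk, hgL⟩ := mem_momKer_iff.1 hg
  obtain ⟨q, hq, u, hu, rfl⟩ := Submodule.mem_sup.1 (restrictTotalDegree_add_le_sup_mul hflat l hgk)
  have hq' := restrictTotalDegree_mono s.le_succ hq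
  have hLu (p : MP n) (hp : p ∈ RxT n (s + 1)) : L (u * p) = 0 := by
    have hup : p * u ∈ RxT n (s + 1 + l) * momKerSubmodule L (s + 1) := by
      rw [RxT, restrictTotalDegree_add, mul_assoc]
      exact Submodule.mul_mem_mul hp hu
    rw [mul_comm]
    exact mul_momKerSubmodule_le_ker _
      (mul_le_mul' le_rfl (momKerSubmodule_mono hsk hL) hup)
  have hqN : q ∈ momKer L (s + 1) := mem_momKer_iff.2 ⟨hq', fun p hp => by
    simpa [add_mul, hLu p hp] using hgL p (restrictTotalDegree_mono hsk hp)⟩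
  exact add_mem (Ideal.subset_span hqN) (mul_momKerSubmodule_le_ideal_span l hu)

end IsFlat

end Flat

section Prolongations

variable {n m t : ℕ} {h : Fin m → MP n} {L : Module.Dual ℝ (MP n)}

lemma mul_momKerSubmodule_le_span_Wset :
    RxT n (t / 2) * momKerSubmodule L (t / 2) ≤ Submodule.span ℝ (Wset h t L) := by
  rw [RxT, restrictTotalDegree_eq_span, ← Submodule.span_eq (momKerSubmodule L (t / 2)),
    Submodule.span_mul_span]
  refine Submodule.span_mono ?_
  rintro _ ⟨_, ⟨α, hα, rfl⟩, g, hg, rfl⟩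
  exact ⟨α, g, hα, hg, rfl⟩

lemma Wset_subset_ideal {J : Ideal (MP n)} (hJ : momKer L (t / 2) ⊆ J) : Wset h t L ⊆ J := by
  rintro _ ⟨α, g, -, hg, rfl⟩
  exact J.mul_mem_left _ (hJ hg)

lemma generator_mem_momKer {s : ℕ} (hst : s ≤ t / 2) (hL : ∀ g ∈ Hset h t, L g = 0) {j : Fin m}
    (hj : (h j).totalDegree ≤ s) : h j ∈ momKer L s :=
  ⟨hj, fun β hβ => hL _ ⟨β, j, by omega, mul_comm _ _⟩⟩

lemma Hset_subset_ideal {J : Ideal (MP n)} (hJ : ∀ j, h j ∈ J) : Hset h t ⊆ J := by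
  rintro _ ⟨α, j, -, rfl⟩
  exact J.mul_mem_left _ (hJ j)

end Prolongations

theorem dimProj_eq_of_momRank_eq_general {n m s t : ℕ} (h : Fin m → MP n)
    (hs1 : 1 ≤ s) (hst : s ≤ t / 2) (L : Module.Dual ℝ (MP n)) (hL : L ∈ Kpos h t)
    (hrank : momRank L s = momRank L (s - 1)) :
    dimProj (2 * s) (Hset h t ∪ Wset h t L) = dimProj (s - 1) (Hset h t ∪ Wset h t L) ∧
    ((∀ j, (h j).totalDegree ≤ s) →
      dimProj (2 * s) (Hset h t ∪ Wset h t L) =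
        dimProj (2 * s) (plusOp (Hset h t ∪ Wset h t L))) := by
  obtain ⟨r, rfl⟩ := Nat.exists_eq_add_of_le' hs1
  have hflat : IsFlat L r := isFlat_of_momRank_eq hrank
  have hdeg : RxT n (2 * (r + 1)) ≤ RxT n (r + 1 + t / 2) := restrictTotalDegree_mono (by omega)
  have hspan : RxT n (t / 2) * momKerSubmodule L (r + 1) ≤
      Submodule.span ℝ (Hset h t ∪ Wset h t L) :=
    (mul_le_mul' le_rfl (momKerSubmodule_mono hst hL.2)).trans
      (mul_momKerSubmodule_le_span_Wset.trans (Submodule.span_mono Set.subset_union_right))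
  refine ⟨dimProj_eq_of_le_sup_span (by omega) ?_, fun hD => ?_⟩
  · exact hdeg.trans ((restrictTotalDegree_add_le_sup_mul hflat _).trans (sup_le_sup_left hspan _))
  · have hJ : Hset h t ∪ Wset h t L ⊆ Ideal.span (momKer L (r + 1)) := Set.union_subset
      (Hset_subset_ideal fun j => Ideal.subset_span (generator_mem_momKer hst hL.1 (hD j)))
      (Wset_subset_ideal (hflat.momKer_subset_ideal_span hst hL.2))
    exact dimProj_eq_of_inf_span_le Set.subset_union_left
      ((inf_le_inf hdeg (span_plusOp_le hJ)).trans ((hflat.inf_ideal_span_le_mul _).trans hspan))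

/-- Let `L*` be generic in `K_{t,⪰}`, `1 ≤ s ≤ ⌊t/2⌋`, `G_t = H_t ∪ W_t`.
If `rank M_s(L*) = rank M_{s−1}(L*)`, then `dim π_{2s}(G_t^⊥) = dim π_{s−1}(G_t^⊥)`; if
moreover `s ≥ D = max_j deg h_j`, then also `dim π_{2s}(G_t^⊥) = dim π_{2s}((G_t⁺)^⊥)`. -/
theorem dimProj_eq_of_momRank_eq {n m s t : ℕ} (h : Fin m → MP n)
    (hs1 : 1 ≤ s) (hst : s ≤ t / 2)
    (Lstar : Module.Dual ℝ (MP n)) (hgen : Generic h t Lstar)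
    (hrank : momRank Lstar s = momRank Lstar (s - 1)) :
    dimProj (2 * s) (Hset h t ∪ Wset h t Lstar) =
      dimProj (s - 1) (Hset h t ∪ Wset h t Lstar) ∧
    ((∀ j, (h j).totalDegree ≤ s) →
      dimProj (2 * s) (Hset h t ∪ Wset h t Lstar) =
        dimProj (2 * s) (plusOp (Hset h t ∪ Wset h t Lstar))) :=
  dimProj_eq_of_momRank_eq_general h hs1 hst Lstar hgen.1 hrank
end

section
/- Let L* be a generic element of K_{t,⪰}, let 1 ≤ s ≤ ⌊t/2⌋, and let G_t = H_t ∪ W_t. Assume dim π_{2s}(G_t^⊥) = dim π_{s−1}(G_t^⊥) and dim π_{2s}(G_t^⊥) = dim π_{2s}((G_t^+)^⊥). Then rank M_s(L*) = rank M_{s−1}(L*), and for any set B of monomials of degree at most s−1, B satisfies the direct sum decomposition ℝ[x]_{s−1} = Span_ℝ(B) ⊕ (Span_ℝ(G_t) ∩ ℝ[x]_{s−1}) if and only if the columns of M_{s−1}(L*) indexed by B form a maximal linearly independent set of columns of M_{s−1}(L*). -/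
open MvPolynomial

/-! Let `G` be a set of polynomials with span `U`, and `L` a functional vanishing on `U` and
positive semidefinite in degree `d`, with `Ker M_d(L) ⊆ U`; here `G = G_t` and `d = ⌊t/2⌋`. As
`dim π_k(G^⊥)` is the dimension of `ℝ[x]_k / (U ∩ ℝ[x]_k)`, its equality for `k = s` and `k = r`
gives `ℝ[x]_s ⊆ ℝ[x]_r + U`. The condition on `G⁺` makes `U` stable under multiplication as long
as the degree stays at most `2s`; as `L` vanishes on `U`, this puts `U ∩ ℝ[x]_k` inside
`Ker M_k(L)` for `k ≤ s`. Conversely, a polynomial in `Ker M_k(L)` is isotropic for the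
semidefinite form `(p, q) ↦ L(pq)` on `ℝ[x]_d`, so it lies in `Ker M_d(L) ⊆ U`. Hence
`U ∩ ℝ[x]_k = Ker M_k(L)` for `k ≤ s`. In particular `ℝ[x]_r` surjects onto `ℝ[x]_s / Ker M_s(L)`,
where the form is nondegenerate, so `M_r(L)` has the rank of `M_s(L)`; and `Span(B)` complements
`U ∩ ℝ[x]_r`, the kernel of the column map on `ℝ[x]_r`, exactly when that map sends `B` to a
basis of its image. -/

section LinearAlgebra

variable {R V W ι : Type*} [CommRing R] [AddCommGroup V] [Module R V] [AddCommGroup W] [Module R W]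

theorem finrank_range_dualMap_comp_comp_eq {B : V →ₗ[R] Module.Dual R V} (hB : B.IsRefl)
    (j : W →ₗ[R] V) (hj : LinearMap.range j ⊔ LinearMap.ker B = ⊤) :
    Module.finrank R (LinearMap.range (j.dualMap ∘ₗ B ∘ₗ j)) =
      Module.finrank R (LinearMap.range B) := by
  have hrange : LinearMap.range (B ∘ₗ j) = LinearMap.range B := by
    rw [LinearMap.range_comp, LinearMap.range_eq_map B, ← hj, Submodule.map_sup,
      LinearMap.le_ker_iff_map.1 le_rfl, sup_bot_eq]
  have hinj : Function.Injective (j.dualMap.domRestrict (LinearMap.range B)) := by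
    refine (injective_iff_map_eq_zero _).2 ?_
    rintro ⟨_, v, rfl⟩ hv
    have hker : LinearMap.range j ⊔ LinearMap.ker B ≤ LinearMap.ker (B v) := by
      refine sup_le ?_ fun w hw => hB w v (LinearMap.congr_fun hw v)
      rintro _ ⟨w, rfl⟩
      exact LinearMap.congr_fun hv w
    exact Subtype.ext (LinearMap.ker_eq_top.1 (top_le_iff.1 (hj ▸ hker)))
  rw [LinearMap.range_comp, hrange, ← LinearMap.range_domRestrict,
    LinearMap.finrank_range_of_inj hinj]

theorem span_inf_ker_eq_bot_and_sup_eq_iff {v : ι → V} (hv : LinearIndependent R v)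
    (f : V →ₗ[R] W) {S : Submodule R V} (hvS : Submodule.span R (Set.range v) ≤ S) :
    (Submodule.span R (Set.range v) ⊓ (LinearMap.ker f ⊓ S) = ⊥ ∧
      Submodule.span R (Set.range v) ⊔ (LinearMap.ker f ⊓ S) = S) ↔
    (LinearIndependent R (f ∘ v) ∧ (Submodule.span R (Set.range v)).map f = S.map f) := by
  rw [inf_left_comm, inf_eq_left.2 hvS, inf_comm, ← disjoint_iff,
    ← sup_inf_assoc_of_le _ hvS, inf_eq_right, ← LinearMap.map_le_map_iff]
  refine and_congr ⟨hv.map, Submodule.range_ker_disjoint⟩ ?_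
  exact ⟨fun h => le_antisymm (Submodule.map_mono hvS) h, fun h => h.ge⟩

end LinearAlgebra

section DimProj

variable {n k l m : ℕ} {G G' : Set (MP n)}

theorem RxT_mono (hkl : k ≤ l) : RxT n k ≤ RxT n l := fun p hp =>
  (mem_restrictTotalDegree _ _ p).2 (((mem_restrictTotalDegree _ _ p).1 hp).trans hkl)

theorem dimProj_eq_finrank_map_mkQ (k : ℕ) (G : Set (MP n)) :
    dimProj k G = Module.finrank ℝ ((RxT n k).map (Submodule.span ℝ G).mkQ) := by
  rw [dimProj, annih, ← Submodule.range_dualMap_mkQ_eq, projDual, ← LinearMap.range_comp,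
    LinearMap.dualMap_comp_dualMap, LinearMap.finrank_range_dualMap_eq_finrank_range,
    LinearMap.range_comp, Submodule.range_subtype]

theorem dimProj_mono (hkl : k ≤ l) (G : Set (MP n)) : dimProj k G ≤ dimProj l G := by
  simp only [dimProj_eq_finrank_map_mkQ]
  exact Submodule.finrank_mono (Submodule.map_mono (RxT_mono hkl))

theorem dimProj_eq_of_le_of_le (hkl : k ≤ l) (hlm : l ≤ m) (hd : dimProj m G = dimProj k G) :
    dimProj l G = dimProj k G :=
  le_antisymm ((dimProj_mono hlm G).trans_eq hd) (dimProj_mono hkl G)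

theorem RxT_le_sup_span_of_dimProj_eq (hkl : k ≤ l) (hd : dimProj l G = dimProj k G) :
    RxT n l ≤ RxT n k ⊔ Submodule.span ℝ G := by
  simp only [dimProj_eq_finrank_map_mkQ] at hd
  rw [← Submodule.ker_mkQ (Submodule.span ℝ G), ← LinearMap.map_le_map_iff]
  exact (Submodule.eq_of_le_of_finrank_eq (Submodule.map_mono (RxT_mono hkl)) hd.symm).ge

theorem mem_span_of_dimProj_eq (hGG' : G ⊆ G') (hd : dimProj l G = dimProj l G') {p : MP n}
    (hp : p ∈ RxT n l) (hpG' : p ∈ Submodule.span ℝ G') : p ∈ Submodule.span ℝ G := by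
  have hproj : (annih G').map (projDual n l) = (annih G).map (projDual n l) :=
    Submodule.eq_of_le_of_finrank_eq
      (Submodule.map_mono (Submodule.dualAnnihilator_anti (Submodule.span_mono hGG'))) hd.symm
  refine (Subspace.forall_mem_dualAnnihilator_apply_eq_zero_iff _ _).1 fun f hf => ?_
  obtain ⟨f', hf', hff'⟩ := hproj.ge (Submodule.mem_map_of_mem hf)
  calc f p = f' p := (LinearMap.congr_fun hff' ⟨p, hp⟩).symm
    _ = 0 := (Submodule.mem_dualAnnihilator f').1 hf' p hpG'

theorem X_mul_mem_span_plusOp (i : Fin n) {p : MP n} (hp : p ∈ Submodule.span ℝ G) :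
    X i * p ∈ Submodule.span ℝ (plusOp G) := by
  refine Submodule.span_le (p := (Submodule.span ℝ (plusOp G)).comap
    (LinearMap.mulLeft ℝ (X i))) |>.2 (fun g hg => ?_) hp
  exact Submodule.subset_span (Or.inr (Set.mem_iUnion.2 ⟨i, g, hg, rfl⟩))

theorem monomial_mul_mem_span (hd : dimProj l G = dimProj l (plusOp G)) {g : MP n}
    (hg : g ∈ Submodule.span ℝ G) (a : Fin n →₀ ℕ) (c : ℝ)
    (hdeg : (monomial a c).totalDegree + g.totalDegree ≤ l) :
    monomial a c * g ∈ Submodule.span ℝ G := by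
  refine induction_on_monomial (motive := fun p : MP n =>
    p.totalDegree + g.totalDegree ≤ l → p * g ∈ Submodule.span ℝ G)
    (fun c _ => ?_) (fun p i ih hpXdeg => ?_) a c hdeg
  · rw [C_mul']
    exact Submodule.smul_mem _ c hg
  · rcases eq_or_ne p 0 with rfl | hp
    · simp
    have hpX : p.totalDegree ≤ (p * X i).totalDegree :=
      totalDegree_le_of_dvd_of_isDomain (dvd_mul_right p _) (mul_ne_zero hp (X_ne_zero i))
    refine mem_span_of_dimProj_eq Set.subset_union_left hd
      ((mem_restrictTotalDegree _ _ _).2 ((totalDegree_mul _ _).trans hpXdeg)) ?_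
    rw [mul_comm p, mul_assoc]
    exact X_mul_mem_span_plusOp i (ih ((Nat.add_le_add_right hpX _).trans hpXdeg))

end DimProj

section MomentKernel

variable {n k d : ℕ} {L : Module.Dual ℝ (MP n)}

/-- The linear extension to polynomials of `β ↦ momCol L k β`: it sends `p` to the vector
`(L(x^α p))_{|α| ≤ k}`. Polynomials `p` of any degree are allowed. -/
noncomputable def momColMap (L : Module.Dual ℝ (MP n)) (k : ℕ) :
    MP n →ₗ[ℝ] ({α : Fin n →₀ ℕ // mdeg α ≤ k} → ℝ) :=
  LinearMap.pi fun α => L ∘ₗ LinearMap.mulLeft ℝ (monomial α.1 1)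

/-- The set `momKer L k`, i.e. `Ker M_k(L)`, as a subspace of the polynomial ring. -/
noncomputable def momKernel (L : Module.Dual ℝ (MP n)) (k : ℕ) : Submodule ℝ (MP n) :=
  LinearMap.ker (momColMap L k) ⊓ RxT n k

theorem RxT_eq_span_monomial (n k : ℕ) :
    RxT n k = Submodule.span ℝ ((fun a => (monomial a 1 : MP n)) '' {a | mdeg a ≤ k}) :=
  restrictSupport_eq_span ℝ _

theorem monomial_mem_RxT {a : Fin n →₀ ℕ} (ha : mdeg a ≤ k) : (monomial a 1 : MP n) ∈ RxT n k :=
  RxT_eq_span_monomial n k ▸ Submodule.subset_span ⟨a, ha, rfl⟩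

theorem momColMap_monomial (L : Module.Dual ℝ (MP n)) (k : ℕ) (b : Fin n →₀ ℕ) :
    momColMap L k (monomial b 1) = momCol L k b := by
  ext α
  simp [momColMap, momCol, monomial_mul]

theorem coe_momKernel (L : Module.Dual ℝ (MP n)) (k : ℕ) :
    (momKernel L k : Set (MP n)) = momKer L k := by
  ext p
  simp [momKernel, momKer, momColMap, funext_iff, mem_restrictTotalDegree, mul_comm p, and_comm]

theorem mem_ker_momColMap_iff {p : MP n} :
    p ∈ LinearMap.ker (momColMap L k) ↔ ∀ q ∈ RxT n k, L (p * q) = 0 := by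
  constructor
  · intro hp
    have hle : RxT n k ≤ LinearMap.ker (L ∘ₗ LinearMap.mulLeft ℝ p) := by
      rw [RxT_eq_span_monomial, Submodule.span_le]
      rintro _ ⟨a, ha, rfl⟩
      exact (congrArg L (mul_comm p _)).trans (congrFun hp ⟨a, ha⟩)
    exact hle
  · intro hp
    ext α
    exact (congrArg L (mul_comm _ p)).trans (hp _ (monomial_mem_RxT α.2))

theorem submoduleOf_momKernel (L : Module.Dual ℝ (MP n)) (k : ℕ) :
    (momKernel L k).submoduleOf (RxT n k) = LinearMap.ker (momBil L k) := by
  ext p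
  have hp : (p : MP n) ∈ momKernel L k ↔ ∀ q ∈ RxT n k, L ((p : MP n) * q) = 0 :=
    (and_iff_left p.2).trans mem_ker_momColMap_iff
  rw [LinearMap.mem_ker, LinearMap.ext_iff, Subtype.forall]
  exact hp

theorem isSymm_momBil (L : Module.Dual ℝ (MP n)) (k : ℕ) : (momBil L k).IsSymm :=
  ⟨fun p q => congrArg L (mul_comm (p : MP n) q)⟩

theorem momKernel_mono (hL : momPSD L d) (hkd : k ≤ d) : momKernel L k ≤ momKernel L d := by
  rintro p ⟨hpker, hpk⟩
  have hpd : p ∈ RxT n d := RxT_mono hkd hpk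
  have hnonneg : ∀ q : RxT n d, 0 ≤ momBil L d q q := fun q =>
    hL q ((mem_restrictTotalDegree _ _ _).1 q.2)
  have hpp : momBil L d ⟨p, hpd⟩ ⟨p, hpd⟩ = 0 := mem_ker_momColMap_iff.1 hpker p hpk
  have hmem : (⟨p, hpd⟩ : RxT n d) ∈ LinearMap.ker (momBil L d) :=
    (LinearMap.BilinForm.apply_apply_same_eq_zero_iff _ hnonneg (isSymm_momBil L d)).1 hpp
  rwa [← submoduleOf_momKernel] at hmem

theorem momRank_eq_of_le_sup {r s : ℕ} (hrs : r ≤ s) (h : RxT n s ≤ RxT n r ⊔ momKernel L s) :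
    momRank L s = momRank L r := by
  refine (finrank_range_dualMap_comp_comp_eq (isSymm_momBil L s).isRefl
    (Submodule.inclusion (RxT_mono hrs)) ?_).symm
  rw [Submodule.range_inclusion, ← submoduleOf_momKernel]
  exact (Submodule.submoduleOf_sup_of_le (RxT_mono hrs) inf_le_right).symm.trans
    (Submodule.submoduleOf_eq_top.2 h)

theorem spanMon_inf_momKernel_eq_bot_and_sup_eq_iff (L : Module.Dual ℝ (MP n))
    {B : Set (Fin n →₀ ℕ)} (hB : ∀ a ∈ B, mdeg a ≤ k) :
    (spanMon B ⊓ momKernel L k = ⊥ ∧ spanMon B ⊔ momKernel L k = RxT n k) ↔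
    (LinearIndependent ℝ (fun b : B => momCol L k ↑b) ∧
      Submodule.span ℝ (momCol L k '' B) =
        Submodule.span ℝ (momCol L k '' {β | mdeg β ≤ k})) := by
  have hspan (A : Set (Fin n →₀ ℕ)) : Submodule.span ℝ (momCol L k '' A) =
      (Submodule.span ℝ ((fun a => (monomial a 1 : MP n)) '' A)).map (momColMap L k) := by
    simp only [Submodule.map_span, Set.image_image, momColMap_monomial]
  have hmon : LinearIndependent ℝ (fun b : B => (monomial (b : Fin n →₀ ℕ) 1 : MP n)) := by
    simpa [Function.comp_def] using
      (basisMonomials (Fin n) ℝ).linearIndependent.comp _ Subtype.val_injective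
  have hBk : spanMon B ≤ RxT n k := by
    rw [RxT_eq_span_monomial]
    exact Submodule.span_mono (Set.image_mono hB)
  rw [spanMon, Set.image_eq_range] at hBk
  rw [hspan, hspan, ← RxT_eq_span_monomial, spanMon, Set.image_eq_range, momKernel,
    span_inf_ker_eq_bot_and_sup_eq_iff hmon (momColMap L k) hBk]
  simp only [Function.comp_def, momColMap_monomial]

end MomentKernel

section Truncation

variable {n d l r s : ℕ} {G : Set (MP n)} {L : Module.Dual ℝ (MP n)}

theorem span_inf_RxT_le_momKernel (hL : L ∈ annih G)
    (hd : dimProj l G = dimProj l (plusOp G)) (hrl : 2 * r ≤ l) :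
    Submodule.span ℝ G ⊓ RxT n r ≤ momKernel L r := by
  rintro g ⟨hgG, hgr⟩
  refine ⟨?_, hgr⟩
  ext ⟨a, ha⟩
  refine (Submodule.mem_dualAnnihilator L).1 hL _ (monomial_mul_mem_span hd hgG a 1 ?_)
  have hdega : (monomial a (1 : ℝ)).totalDegree ≤ r := (totalDegree_monomial_le a 1).trans ha
  have hdegg : g.totalDegree ≤ r := (mem_restrictTotalDegree _ _ g).1 hgr
  omega

theorem span_inf_RxT_eq_momKernel (hL : L ∈ annih G) (hpsd : momPSD L d)
    (hker : momKer L d ⊆ Submodule.span ℝ G)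
    (hd : dimProj l G = dimProj l (plusOp G)) (hrl : 2 * r ≤ l) (hrd : r ≤ d) :
    Submodule.span ℝ G ⊓ RxT n r = momKernel L r :=
  le_antisymm (span_inf_RxT_le_momKernel hL hd hrl)
    (le_inf ((momKernel_mono hpsd hrd).trans ((coe_momKernel L d).trans_subset hker))
      inf_le_right)

theorem momRank_eq_and_basis_iff_general (hL : L ∈ annih G) (hpsd : momPSD L d)
    (hker : momKer L d ⊆ Submodule.span ℝ G) (hrs : r ≤ s) (hsd : s ≤ d)
    (hdim1 : dimProj s G = dimProj r G)
    (hdim2 : dimProj (2 * s) G = dimProj (2 * s) (plusOp G)) :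
    momRank L s = momRank L r ∧
    (∀ B : Set (Fin n →₀ ℕ), (∀ a ∈ B, mdeg a ≤ r) →
      ((spanMon B ⊓ (Submodule.span ℝ G ⊓ RxT n r) = ⊥ ∧
        spanMon B ⊔ (Submodule.span ℝ G ⊓ RxT n r) = RxT n r) ↔
       (LinearIndependent ℝ (fun b : B => momCol L r ↑b) ∧
        Submodule.span ℝ (momCol L r '' B) =
          Submodule.span ℝ (momCol L r '' {β | mdeg β ≤ r})))) := by
  have hmomKernel (k : ℕ) (hks : k ≤ s) : Submodule.span ℝ G ⊓ RxT n k = momKernel L k :=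
    span_inf_RxT_eq_momKernel hL hpsd hker hdim2 (Nat.mul_le_mul_left 2 hks) (hks.trans hsd)
  refine ⟨momRank_eq_of_le_sup hrs ?_, fun B hB => ?_⟩
  · rw [← hmomKernel s le_rfl, ← sup_inf_assoc_of_le _ (RxT_mono hrs)]
    exact le_inf (RxT_le_sup_span_of_dimProj_eq hrs hdim1) le_rfl
  · rw [hmomKernel r hrs]
    exact spanMon_inf_momKernel_eq_bot_and_sup_eq_iff L hB

end Truncation

section Generators

variable {n m t : ℕ} {h : Fin m → MP n} {L : Module.Dual ℝ (MP n)}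

theorem mem_annih_Hset_union_Wset (hL : ∀ g ∈ Hset h t, L g = 0) :
    L ∈ annih (Hset h t ∪ Wset h t L) := by
  refine (Submodule.mem_dualAnnihilator L).2 fun p hp => ?_
  refine Submodule.span_le (p := LinearMap.ker L) |>.2 ?_ hp
  rintro _ (hg | ⟨α, g, hα, hg, rfl⟩)
  · exact hL _ hg
  · exact (congrArg L (mul_comm _ g)).trans (hg.2 α hα)

theorem momKer_subset_Wset (h : Fin m → MP n) (t : ℕ) (L : Module.Dual ℝ (MP n)) :
    momKer L (t / 2) ⊆ Wset h t L :=
  fun g hg => ⟨0, g, Nat.zero_le _, hg, (one_mul g).symm⟩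

end Generators

/-- Let `L*` be generic in `K_{t,⪰}`, `1 ≤ s ≤ ⌊t/2⌋`, `G_t = H_t ∪ W_t`,
and assume `dim π_{2s}(G_t^⊥) = dim π_{s−1}(G_t^⊥) = dim π_{2s}((G_t⁺)^⊥)`.  Then
`rank M_s(L*) = rank M_{s−1}(L*)`, and a set `B` of monomials of degree at most `s−1` realizes
`ℝ[x]_{s−1} = Span_ℝ(B) ⊕ (Span_ℝ(G_t) ∩ ℝ[x]_{s−1})` iff the columns of `M_{s−1}(L*)` indexed
by `B` form a maximal linearly independent set of columns. -/
theorem momRank_eq_and_basis_iff {n m s t : ℕ} (h : Fin m → MP n)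
    (hs1 : 1 ≤ s) (hst : s ≤ t / 2)
    (Lstar : Module.Dual ℝ (MP n)) (hgen : Generic h t Lstar)
    (hdim1 : dimProj (2 * s) (Hset h t ∪ Wset h t Lstar) =
      dimProj (s - 1) (Hset h t ∪ Wset h t Lstar))
    (hdim2 : dimProj (2 * s) (Hset h t ∪ Wset h t Lstar) =
      dimProj (2 * s) (plusOp (Hset h t ∪ Wset h t Lstar))) :
    momRank Lstar s = momRank Lstar (s - 1) ∧
    (∀ B : Set (Fin n →₀ ℕ), (∀ a ∈ B, mdeg a ≤ s - 1) →
      ((spanMon B ⊓ (Submodule.span ℝ (Hset h t ∪ Wset h t Lstar) ⊓ RxT n (s - 1)) = ⊥ ∧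
        spanMon B ⊔ (Submodule.span ℝ (Hset h t ∪ Wset h t Lstar) ⊓ RxT n (s - 1)) =
          RxT n (s - 1)) ↔
       (LinearIndependent ℝ (fun b : B => momCol Lstar (s - 1) ↑b) ∧
        Submodule.span ℝ (momCol Lstar (s - 1) '' B) =
          Submodule.span ℝ (momCol Lstar (s - 1) '' {β | mdeg β ≤ s - 1})))) :=
  momRank_eq_and_basis_iff_general (mem_annih_Hset_union_Wset hgen.1.1) hgen.1.2
    (fun _ hg => Submodule.subset_span (Or.inr (momKer_subset_Wset h t Lstar hg)))
    (Nat.sub_le s 1) hst (dimProj_eq_of_le_of_le (Nat.sub_le s 1) (by omega) hdim1) hdim2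
end
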